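/- Let μ₁, μ₂ be probability measures on the unit circle 𝕋, and let α = ∫_𝕋 ζ dμ₁(ζ) (so |α| ≤ 1). Define η(z) = η_{μ₁}(α^{-1} η_{μ₂}(αz)) if α ≠ 0, and η(z) = η_{μ₁}(η'_{μ₂}(0)·z) if α = 0. Then η is analytic on 𝔻 and |η(z)| ≤ |z| for all z ∈ 𝔻; consequently η = η_μ for a unique probability measure μ on 𝕋. -/

import Mathlib

open MeasureTheory Complex

/-- The generating function `z ↦ ∫ (1 - zζ)⁻¹ dμ(ζ)` of the moments of `μ`. -/
noncomputable def momentGenerating (μ : Measure ℂ) (z : ℂ) : ℂ :=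
  ∫ ζ : ℂ, (1 - z * ζ)⁻¹ ∂μ

lemma one_sub_mul_ne_zero_of_norm {z ζ : ℂ} (hz : ‖z‖ < 1) (hζ : ‖ζ‖ = 1) : 1 - z * ζ ≠ 0 := by
  intro h
  have h' : z * ζ = 1 := (sub_eq_zero.mp h).symm
  have := congrArg norm h'
  simp [hζ] at this
  linarith

lemma ae_norm_eq_one {μ : Measure ℂ} (h : μ {ζ : ℂ | ‖ζ‖ = 1}ᶜ = 0) : ∀ᵐ ζ ∂μ, ‖ζ‖ = 1 := h

lemma half_le_re_inv {w : ℂ} (hw : ‖w‖ < 1) : 1 / 2 ≤ ((1 - w)⁻¹).re := by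
  have h1 : ‖w‖ ^ 2 < 1 := by nlinarith [norm_nonneg w]
  rw [Complex.sq_norm, normSq_apply] at h1
  have h2 : 0 < normSq (1 - w) := by
    rw [normSq_pos]
    rintro h
    rw [← sub_eq_zero.mp h] at hw
    simp at hw
  rw [inv_re, div_le_div_iff₀ two_pos h2]
  simp only [normSq_apply, sub_re, one_re, sub_im, one_im] at *
  nlinarith

lemma integrable_pow {μ : Measure ℂ} [IsProbabilityMeasure μ] (hμ : ∀ᵐ ζ ∂μ, ‖ζ‖ = 1) (n : ℕ) :
    Integrable (fun ζ : ℂ ↦ ζ ^ n) μ := by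
  refine Integrable.of_bound (by fun_prop) 1 ?_
  filter_upwards [hμ] with ζ hζ
  simp [hζ]

lemma integrable_inv_one_sub_mul {μ : Measure ℂ} [IsProbabilityMeasure μ]
    (hμ : ∀ᵐ ζ ∂μ, ‖ζ‖ = 1) {z : ℂ} (hz : ‖z‖ < 1) :
    Integrable (fun ζ : ℂ ↦ (1 - z * ζ)⁻¹) μ := by
  refine Integrable.of_bound (by fun_prop) (1 - ‖z‖)⁻¹ ?_
  filter_upwards [hμ] with ζ hζ
  rw [norm_inv]
  exact inv_anti₀ (by linarith) (by simpa [hζ] using norm_sub_norm_le (1 : ℂ) (z * ζ))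

lemma hasSum_momentGenerating {μ : Measure ℂ} [IsProbabilityMeasure μ]
    (hμ : ∀ᵐ ζ ∂μ, ‖ζ‖ = 1) {z : ℂ} (hz : ‖z‖ < 1) :
    HasSum (fun n : ℕ ↦ z ^ n * ∫ ζ : ℂ, ζ ^ n ∂μ) (momentGenerating μ z) := by
  have hint (n : ℕ) : Integrable (fun ζ : ℂ ↦ z ^ n * ζ ^ n) μ := (integrable_pow hμ n).const_mul _
  have hnorm (n : ℕ) : ∫ ζ : ℂ, ‖z ^ n * ζ ^ n‖ ∂μ = ‖z‖ ^ n := by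
    rw [integral_congr_ae (g := fun _ ↦ ‖z‖ ^ n)]
    · simp
    · filter_upwards [hμ] with ζ hζ
      simp [hζ]
  have := hasSum_integral_of_summable_integral_norm hint
    (by simpa only [hnorm] using summable_geometric_of_lt_one (norm_nonneg z) hz)
  simp only [MeasureTheory.integral_const_mul] at this
  have hsum : momentGenerating μ z = ∫ ζ : ℂ, ∑' n : ℕ, z ^ n * ζ ^ n ∂μ := by
    refine integral_congr_ae ?_
    filter_upwards [hμ] with ζ hζ
    simp_rw [← mul_pow]
    exact (tsum_geometric_of_norm_lt_one (by simpa [hζ] using hz)).symm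
  rwa [hsum]

lemma hasFPowerSeriesOnBall_momentGenerating {μ : Measure ℂ} [IsProbabilityMeasure μ]
    (hμ : ∀ᵐ ζ ∂μ, ‖ζ‖ = 1) :
    HasFPowerSeriesOnBall (momentGenerating μ)
      (FormalMultilinearSeries.ofScalars ℂ fun n : ℕ ↦ ∫ ζ : ℂ, ζ ^ n ∂μ) 0 1 where
  r_le := by
    refine FormalMultilinearSeries.le_radius_of_bound (r := 1) _ 1 fun n ↦ ?_
    rw [FormalMultilinearSeries.ofScalars_norm]
    have : ∀ᵐ ζ ∂μ, ‖ζ ^ n‖ ≤ (1 : ℝ) := by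
      filter_upwards [hμ] with ζ hζ
      simp [hζ]
    simpa using norm_integral_le_of_norm_le_const this
  r_pos := one_pos
  hasSum {y} hy := by
    have hy' : ‖y‖ < 1 := by simpa [← ofReal_norm] using hy
    simpa [mul_comm, FormalMultilinearSeries.ofScalars_apply_eq] using hasSum_momentGenerating hμ hy'

lemma analyticOnNhd_momentGenerating {μ : Measure ℂ} [IsProbabilityMeasure μ]
    (hμ : ∀ᵐ ζ ∂μ, ‖ζ‖ = 1) :
    AnalyticOnNhd ℂ (momentGenerating μ) (Metric.ball 0 1) := by
  have := (hasFPowerSeriesOnBall_momentGenerating hμ).analyticOnNhd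
  rwa [← ENNReal.ofReal_one, Metric.eball_ofReal] at this

lemma half_le_re_momentGenerating {μ : Measure ℂ} [IsProbabilityMeasure μ]
    (hμ : ∀ᵐ ζ ∂μ, ‖ζ‖ = 1) {z : ℂ} (hz : ‖z‖ < 1) :
    1 / 2 ≤ (momentGenerating μ z).re := by
  have hint := integrable_inv_one_sub_mul hμ hz
  have hre : (momentGenerating μ z).re = ∫ ζ : ℂ, ((1 - z * ζ)⁻¹).re ∂μ := (integral_re hint).symm
  rw [hre]
  have h : ∫ _ : ℂ, (1 / 2 : ℝ) ∂μ ≤ ∫ ζ : ℂ, ((1 - z * ζ)⁻¹).re ∂μ := by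
    refine integral_mono_ae (integrable_const _) hint.re ?_
    filter_upwards [hμ] with ζ hζ
    exact half_le_re_inv (by simpa [hζ] using hz)
  simpa using h

lemma momentGenerating_ne_zero {μ : Measure ℂ} [IsProbabilityMeasure μ]
    (hμ : ∀ᵐ ζ ∂μ, ‖ζ‖ = 1) {z : ℂ} (hz : ‖z‖ < 1) : momentGenerating μ z ≠ 0 := by
  intro h
  have := half_le_re_momentGenerating hμ hz
  norm_num [h] at this

lemma eta_eq_one_sub_inv {μ : Measure ℂ} [IsProbabilityMeasure μ]
    (hμ : ∀ᵐ ζ ∂μ, ‖ζ‖ = 1) {z : ℂ} (hz : ‖z‖ < 1) :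
    (∫ ζ : ℂ, (z * ζ) / (1 - z * ζ) ∂μ) / (1 + ∫ ζ : ℂ, (z * ζ) / (1 - z * ζ) ∂μ) =
      1 - (momentGenerating μ z)⁻¹ := by
  have hψ : ∫ ζ : ℂ, (z * ζ) / (1 - z * ζ) ∂μ = momentGenerating μ z - 1 := by
    have h1 : ∫ ζ : ℂ, ((1 - z * ζ)⁻¹ - 1) ∂μ = momentGenerating μ z - 1 := by
      rw [integral_sub (integrable_inv_one_sub_mul hμ hz) (integrable_const _)]
      simp [momentGenerating]
    rw [← h1]
    refine integral_congr_ae ?_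
    filter_upwards [hμ] with ζ hζ
    have := one_sub_mul_ne_zero_of_norm hz hζ
    field_simp
    ring
  rw [hψ, add_sub_cancel, sub_div, div_self (momentGenerating_ne_zero hμ hz), one_div]

lemma norm_one_sub_inv_le_one {w : ℂ} (hw : 1 / 2 ≤ w.re) : ‖1 - w⁻¹‖ ≤ 1 := by
  have h0 : w ≠ 0 := by
    rintro rfl
    norm_num at hw
  have : 1 - w⁻¹ = (w - 1) / w := by field_simp
  rw [this, norm_div, div_le_one (norm_pos_iff.mpr h0)]
  refine le_of_sq_le_sq ?_ (norm_nonneg _)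
  simp only [Complex.sq_norm, normSq_apply, sub_re, one_re, sub_im, one_im]
  nlinarith

lemma eta_analytic_and_bound {μ : Measure ℂ} [IsProbabilityMeasure μ] (hμ : ∀ᵐ ζ ∂μ, ‖ζ‖ = 1)
    {η : ℂ → ℂ} (hη : ∀ z, η z = (∫ ζ : ℂ, (z * ζ) / (1 - z * ζ) ∂μ) /
      (1 + ∫ ζ : ℂ, (z * ζ) / (1 - z * ζ) ∂μ)) :
    AnalyticOnNhd ℂ η (Metric.ball 0 1) ∧ (∀ z, ‖z‖ < 1 → ‖η z‖ ≤ ‖z‖) ∧ ‖deriv η 0‖ ≤ 1 := by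
  have heq : Set.EqOn (fun z ↦ 1 - (momentGenerating μ z)⁻¹) η (Metric.ball 0 1) := fun z hz ↦ by
    rw [hη, eta_eq_one_sub_inv hμ (by simpa using hz)]
  have han : AnalyticOnNhd ℂ η (Metric.ball 0 1) := by
    refine AnalyticOnNhd.congr Metric.isOpen_ball ?_ heq
    refine analyticOnNhd_const.sub ((analyticOnNhd_momentGenerating hμ).inv fun z hz ↦ ?_)
    exact momentGenerating_ne_zero hμ (by simpa using hz)
  have h0 : η 0 = 0 := by simp [hη]
  have hmaps : Set.MapsTo η (Metric.ball 0 1) (Metric.closedBall 0 1) := fun z hz ↦ by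
    rw [← heq hz, mem_closedBall_zero_iff]
    exact norm_one_sub_inv_le_one (half_le_re_momentGenerating hμ (by simpa using hz))
  exact ⟨han, fun z hz ↦ norm_le_norm_of_mapsTo_ball han.differentiableOn hmaps h0 hz,
    norm_deriv_le_one_of_mapsTo_ball han.differentiableOn (by rwa [h0]) one_pos⟩

/-- The moments of nonnegative order determine a probability measure on the unit circle. -/
lemma eq_of_forall_moment_eq {μ ν : Measure ℂ} [IsProbabilityMeasure μ] [IsProbabilityMeasure ν]
    (hμ : ∀ᵐ ζ ∂μ, ‖ζ‖ = 1) (hν : ∀ᵐ ζ ∂ν, ‖ζ‖ = 1)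
    (h : ∀ n : ℕ, ∫ ζ : ℂ, ζ ^ n ∂μ = ∫ ζ : ℂ, ζ ^ n ∂ν) : μ = ν := by
  have hS : MeasurableSet (Metric.sphere (0 : ℂ) 1) := Metric.isClosed_sphere.measurableSet
  have hres {κ : Measure ℂ} (hκ : ∀ᵐ ζ ∂κ, ‖ζ‖ = 1) : κ.restrict (Metric.sphere (0 : ℂ) 1) = κ :=
    Measure.restrict_eq_self_of_ae_mem (by simpa using hκ)
  have hmoment {κ : Measure ℂ} (hκ : ∀ᵐ ζ ∂κ, ‖ζ‖ = 1) (n : ℕ) :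
      ∫ ζ : Metric.sphere (0 : ℂ) 1, (ζ : ℂ) ^ n ∂(κ.comap Subtype.val) = ∫ ζ : ℂ, ζ ^ n ∂κ := by
    rw [integral_subtype_comap hS fun ζ : ℂ ↦ ζ ^ n, hres hκ]
  have hfin (κ : Measure ℂ) [IsProbabilityMeasure κ] :
      IsFiniteMeasure (κ.comap (Subtype.val : Metric.sphere (0 : ℂ) 1 → ℂ)) := by
    refine ⟨?_⟩
    rw [comap_subtype_coe_apply hS]
    exact measure_lt_top _ _
  have := hfin μ
  have := hfin ν
  suffices hcomap : μ.comap (Subtype.val : Metric.sphere (0 : ℂ) 1 → ℂ) = ν.comap Subtype.val by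
    rw [← hres hμ, ← hres hν, ← map_comap_subtype_coe hS, ← map_comap_subtype_coe hS, hcomap]
  let coord : BoundedContinuousFunction (Metric.sphere (0 : ℂ) 1) ℂ :=
    BoundedContinuousFunction.mkOfCompact ⟨Subtype.val, continuous_subtype_val⟩
  have hcoord (x : Metric.sphere (0 : ℂ) 1) : coord x = x := rfl
  have hzpow (n : ℤ) : ∫ ζ : Metric.sphere (0 : ℂ) 1, (ζ : ℂ) ^ n ∂(μ.comap Subtype.val) =
      ∫ ζ : Metric.sphere (0 : ℂ) 1, (ζ : ℂ) ^ n ∂(ν.comap Subtype.val) := by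
    have hnat (n : ℕ) : ∫ ζ : Metric.sphere (0 : ℂ) 1, (ζ : ℂ) ^ n ∂(μ.comap Subtype.val) =
        ∫ ζ : Metric.sphere (0 : ℂ) 1, (ζ : ℂ) ^ n ∂(ν.comap Subtype.val) := by
      rw [hmoment hμ, hmoment hν, h]
    obtain ⟨m, rfl | rfl⟩ := n.eq_nat_or_neg
    · simpa using hnat m
    · have hconj (ζ : Metric.sphere (0 : ℂ) 1) :
          (ζ : ℂ) ^ (-(m : ℤ)) = (starRingEnd ℂ) ((ζ : ℂ) ^ m) := by
        rw [zpow_neg, zpow_natCast, inv_eq_conj (by simp)]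
      simp only [hconj, integral_conj, hnat]
  refine ext_of_forall_mem_subalgebra_integral_eq_of_pseudoEMetric_complete_countable
    (𝕜 := ℂ) (A := StarAlgebra.adjoin ℂ {coord}) ?_ fun g hg ↦ ?_
  · intro x y hxy
    refine ⟨coord, ⟨_, ⟨coord, StarAlgebra.self_mem_adjoin_singleton ℂ coord, rfl⟩, rfl⟩, ?_⟩
    simpa [hcoord, Subtype.ext_iff] using hxy
  · have hclosure : ∀ g ∈ Submonoid.closure ({coord} ∪ star {coord}),
        ∃ n : ℤ, ∀ x : Metric.sphere (0 : ℂ) 1, g x = (x : ℂ) ^ n := by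
      intro g hg
      induction hg using Submonoid.closure_induction with
      | mem f hf =>
        rcases hf with hf | hf
        · exact ⟨1, fun x ↦ by rw [Set.mem_singleton_iff.mp hf, hcoord, zpow_one]⟩
        · refine ⟨-1, fun x ↦ ?_⟩
          have hf' : f = star coord := by rw [← star_star f, Set.mem_singleton_iff.mp hf]
          rw [hf', BoundedContinuousFunction.star_apply, hcoord, zpow_neg_one, inv_eq_conj (by simp)]
          rfl
      | one => exact ⟨0, fun x ↦ by simp⟩
      | mul f g _ _ hf hg =>
        obtain ⟨m, hm⟩ := hf
        obtain ⟨n, hn⟩ := hg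
        refine ⟨m + n, fun x ↦ ?_⟩
        rw [BoundedContinuousFunction.mul_apply, hm, hn, zpow_add₀]
        exact ne_zero_of_mem_unit_sphere x
    have hspan : g ∈ Submodule.span ℂ
        (Submonoid.closure ({coord} ∪ star {coord}) : Set (BoundedContinuousFunction _ ℂ)) := by
      rw [← StarAlgebra.adjoin_eq_span]
      exact hg
    clear hg
    induction hspan using Submodule.span_induction with
    | mem f hf =>
      obtain ⟨n, hn⟩ := hclosure f hf
      simp only [hn, hzpow]
    | zero => simp
    | add f g _ _ hf hg =>
      simp only [BoundedContinuousFunction.add_apply]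
      rw [integral_add (f.integrable _) (g.integrable _),
        integral_add (f.integrable _) (g.integrable _), hf, hg]
    | smul c f _ hf =>
      simp only [BoundedContinuousFunction.smul_apply, integral_smul, hf]

lemma eq_of_eqOn_momentGenerating {μ ν : Measure ℂ} [IsProbabilityMeasure μ]
    [IsProbabilityMeasure ν] (hμ : ∀ᵐ ζ ∂μ, ‖ζ‖ = 1) (hν : ∀ᵐ ζ ∂ν, ‖ζ‖ = 1)
    (h : Set.EqOn (momentGenerating μ) (momentGenerating ν) (Metric.ball 0 1)) : μ = ν := by
  refine eq_of_forall_moment_eq hμ hν fun n ↦ ?_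
  have hs := ((hasFPowerSeriesOnBall_momentGenerating hμ).hasFPowerSeriesAt.congr
    (h.eventuallyEq_of_mem (Metric.ball_mem_nhds 0 one_pos))).eq_formalMultilinearSeries
    (hasFPowerSeriesOnBall_momentGenerating hν).hasFPowerSeriesAt
  simpa using congrArg (fun p ↦ p.coeff n) hs

lemma re_inv_one_sub_mul_conj {w u : ℂ} (hw : ‖w‖ < 1) (hu : ‖u‖ = 1) :
    ((u + w) / (u - w)).re = 2 * ((1 - w * (starRingEnd ℂ) u)⁻¹).re - 1 := by
  have hu0 : u ≠ 0 := norm_ne_zero_iff.mp (by simp [hu])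
  have huw : u - w ≠ 0 := by
    intro h
    rw [sub_eq_zero.mp h] at hu
    exact hw.ne hu
  rw [← inv_eq_conj hu]
  have : (u + w) / (u - w) = 2 * (1 - w * u⁻¹)⁻¹ - 1 := by
    have : 1 - w * u⁻¹ = (u - w) / u := by field_simp
    rw [this, inv_div]
    field_simp
    ring
  rw [this]
  simp

/-- Herglotz representation, at the level of real parts, for a function which is continuous up to
the boundary of the unit disc. -/
lemma exists_probabilityMeasure_re_eq_of_diffContOnCl {p : ℂ → ℂ}
    (hp : DiffContOnCl ℂ p (Metric.ball 0 1)) (hre : ∀ u, ‖u‖ = 1 → 0 ≤ (p u).re)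
    (h0 : p 0 = 1) :
    ∃ μ : ProbabilityMeasure (Metric.sphere (0 : ℂ) 1), ∀ w : ℂ, ‖w‖ < 1 →
      ∫ ζ : Metric.sphere (0 : ℂ) 1, (2 * ((1 - w * (ζ : ℂ))⁻¹).re - 1) ∂(μ : Measure _) =
        (p w).re := by
  have hnorm (θ : ℝ) : ‖circleMap 0 1 θ‖ = 1 := by simp
  have hcont : Continuous fun θ : ℝ ↦ p (circleMap 0 1 θ) :=
    hp.continuousOn.comp_continuous (continuous_circleMap 0 1) fun θ ↦ by
      rw [closure_ball 0 one_ne_zero, mem_closedBall_zero_iff, hnorm]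
  let φ : ℝ → Metric.sphere (0 : ℂ) 1 := fun θ ↦
    ⟨(starRingEnd ℂ) (circleMap 0 1 θ), by simp⟩
  have hφ : Continuous φ := by
    refine Continuous.subtype_mk ?_ _
    fun_prop
  let d : ℝ → ℝ := fun θ ↦ (2 * Real.pi)⁻¹ * (p (circleMap 0 1 θ)).re
  have hd : Continuous d := continuous_const.mul (continuous_re.comp hcont)
  have hd0 (θ : ℝ) : 0 ≤ d θ := mul_nonneg (by positivity) (hre _ (hnorm θ))
  let m : Measure ℝ := volume.restrict (Set.Ioc 0 (2 * Real.pi))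
  have hpoisson {w : ℂ} (hw : ‖w‖ < 1) :
      ∫ θ, d θ * (2 * ((1 - w * (φ θ : ℂ))⁻¹).re - 1) ∂m = (p w).re := by
    have h := congrArg re (hp.circleAverage_re_herglotzRieszKernel_smul' (w := w) (by simpa using hw))
    rw [← h, Real.circleAverage, intervalIntegral.integral_of_le Real.two_pi_pos.le, smul_re,
      smul_eq_mul]
    have hker : Continuous fun θ : ℝ ↦
        (((circleMap 0 1 θ - 0 + (w - 0)) / (circleMap 0 1 θ - 0 - (w - 0))).re •
          p (circleMap 0 1 θ)) := by
      refine (continuous_re.comp (Continuous.div (by fun_prop) (by fun_prop) fun θ h ↦ ?_)).smul hcont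
      rw [sub_zero, sub_zero, sub_eq_zero] at h
      rw [← h, hnorm] at hw
      exact hw.false
    have hint := (hker.integrableOn_Icc (μ := volume) (a := 0) (b := 2 * Real.pi)).mono_set
      Set.Ioc_subset_Icc_self
    rw [show re _ = _ from (integral_re hint).symm, ← MeasureTheory.integral_const_mul]
    refine integral_congr_ae (ae_of_all _ fun θ ↦ ?_)
    simp only [φ, d, ← re_inv_one_sub_mul_conj hw (hnorm θ), sub_zero]
    simp only [RCLike.re_eq_complex_re, smul_re, smul_eq_mul]
    ring
  have hmass : ∫ θ, d θ ∂m = 1 := by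
    have := hpoisson (w := 0) (by simp)
    rw [h0] at this
    norm_num at this
    exact this
  have hdint : Integrable d m :=
    (hd.integrableOn_Icc (μ := volume) (a := 0) (b := 2 * Real.pi)).mono_set
      Set.Ioc_subset_Icc_self
  have hdm : Measurable fun θ ↦ ENNReal.ofReal (d θ) := hd.measurable.ennreal_ofReal
  have hprob : IsProbabilityMeasure (m.withDensity fun θ ↦ ENNReal.ofReal (d θ)) := by
    refine ⟨?_⟩
    rw [withDensity_apply _ MeasurableSet.univ, Measure.restrict_univ,
      ← ofReal_integral_eq_lintegral_ofReal hdint (ae_of_all _ hd0), hmass, ENNReal.ofReal_one]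
  refine ⟨⟨(m.withDensity fun θ ↦ ENNReal.ofReal (d θ)).map φ,
    Measure.isProbabilityMeasure_map hφ.aemeasurable⟩, fun w hw ↦ ?_⟩
  rw [← hpoisson hw, ProbabilityMeasure.coe_mk, integral_map hφ.aemeasurable,
    integral_withDensity_eq_integral_toReal_smul hdm (ae_of_all _ fun _ ↦ ENNReal.ofReal_lt_top)]
  · simp only [ENNReal.toReal_ofReal (hd0 _), smul_eq_mul]
  · refine Measurable.aestronglyMeasurable ?_
    fun_prop

/-- **Herglotz representation theorem** on the unit disc, for a function with real part at least
`1 / 2`. -/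
lemma exists_eqOn_momentGenerating {g : ℂ → ℂ} (hg : DifferentiableOn ℂ g (Metric.ball 0 1))
    (hre : ∀ z, ‖z‖ < 1 → 1 / 2 ≤ (g z).re) (h0 : g 0 = 1) :
    ∃ μ : Measure ℂ, IsProbabilityMeasure μ ∧ (∀ᵐ ζ ∂μ, ‖ζ‖ = 1) ∧
      Set.EqOn (momentGenerating μ) g (Metric.ball 0 1) := by
  have hr (n : ℕ) : 0 < 1 - 1 / ((n : ℝ) + 2) ∧ 1 - 1 / ((n : ℝ) + 2) < 1 := by
    have : 1 / ((n : ℝ) + 2) < 1 := by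
      rw [div_lt_one (by positivity)]
      linarith [(Nat.cast_nonneg n : (0 : ℝ) ≤ n)]
    have : 0 < 1 / ((n : ℝ) + 2) := by positivity
    constructor <;> linarith
  set r : ℕ → ℝ := fun n ↦ 1 - 1 / ((n : ℝ) + 2) with hr_def
  have hrlim : Filter.Tendsto r Filter.atTop (nhds 1) := by
    have : Filter.Tendsto (fun n : ℕ ↦ 1 / ((n : ℝ) + 2)) Filter.atTop (nhds 0) := by
      simpa [Function.comp_def] using (tendsto_const_div_atTop_nhds_zero_nat (1 : ℝ)).comp
        (Filter.tendsto_add_atTop_nat 2)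
    simpa [hr_def] using this.const_sub 1
  have hrnorm (n : ℕ) {z : ℂ} (hz : ‖z‖ ≤ 1) : ‖(r n : ℂ) * z‖ < 1 := by
    rw [norm_mul, norm_real, Real.norm_of_nonneg (hr n).1.le]
    nlinarith [(hr n).1, (hr n).2, norm_nonneg z]
  have hdilate (n : ℕ) : ∃ μ : ProbabilityMeasure (Metric.sphere (0 : ℂ) 1), ∀ w : ℂ, ‖w‖ < 1 →
      ∫ ζ : Metric.sphere (0 : ℂ) 1, (2 * ((1 - w * (ζ : ℂ))⁻¹).re - 1) ∂(μ : Measure _) =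
        (2 * g (r n * w) - 1).re := by
    refine exists_probabilityMeasure_re_eq_of_diffContOnCl (p := fun w ↦ 2 * g (r n * w) - 1)
      ?_ (fun u hu ↦ ?_) (by norm_num [h0])
    · refine DifferentiableOn.diffContOnCl ?_
      rw [closure_ball 0 one_ne_zero]
      refine ((hg.comp (f := fun w ↦ (r n : ℂ) * w) (by fun_prop) fun z hz ↦ ?_).const_mul
        2).sub_const 1
      simpa using hrnorm n (by simpa using hz)
    · have := hre _ (hrnorm n hu.le)
      simp
      linarith
  choose μs hμs using hdilate
  let U : Ultrafilter (ProbabilityMeasure (Metric.sphere (0 : ℂ) 1)) :=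
    (Filter.hyperfilter ℕ).map μs
  have hlim : Filter.Tendsto μs (Filter.hyperfilter ℕ) (nhds U.lim) := U.le_nhds_lim
  let κ : Measure (Metric.sphere (0 : ℂ) 1) := (U.lim : Measure _)
  let μ : Measure ℂ := κ.map Subtype.val
  have hμprob : IsProbabilityMeasure μ :=
    Measure.isProbabilityMeasure_map measurable_subtype_coe.aemeasurable
  have hμ : ∀ᵐ ζ ∂μ, ‖ζ‖ = 1 := by
    rw [ae_map_iff measurable_subtype_coe.aemeasurable
      (measurableSet_eq_fun (by fun_prop) (by fun_prop))]
    exact ae_of_all _ fun ζ ↦ by simp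
  have hker {w : ℂ} (hw : ‖w‖ < 1) :
      Continuous fun ζ : Metric.sphere (0 : ℂ) 1 ↦ 2 * ((1 - w * (ζ : ℂ))⁻¹).re - 1 := by
    have : Continuous fun ζ : Metric.sphere (0 : ℂ) 1 ↦ (1 - w * (ζ : ℂ))⁻¹ :=
      Continuous.inv₀ (by fun_prop) fun ζ ↦ one_sub_mul_ne_zero_of_norm hw (by simp)
    exact ((continuous_re.comp this).const_mul 2).sub continuous_const
  have hre_eq {w : ℂ} (hw : ‖w‖ < 1) : (momentGenerating μ w).re = (g w).re := by
    have h1 : Filter.Tendsto (fun n ↦ (2 * g (r n * w) - 1).re) (Filter.hyperfilter ℕ)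
        (nhds (∫ ζ, (2 * ((1 - w * (ζ : ℂ))⁻¹).re - 1) ∂κ)) := by
      simp only [← hμs _ _ hw]
      exact ProbabilityMeasure.tendsto_iff_forall_integral_tendsto.mp hlim
        (BoundedContinuousFunction.mkOfCompact ⟨_, hker hw⟩)
    have h2 : Filter.Tendsto (fun n ↦ (2 * g (r n * w) - 1).re) (Filter.hyperfilter ℕ)
        (nhds (2 * g w - 1).re) := by
      refine Filter.Tendsto.mono_left ?_ Nat.hyperfilter_le_atTop
      have hgc : ContinuousAt g w := (hg.differentiableAt
        (Metric.isOpen_ball.mem_nhds (by simpa using hw))).continuousAt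
      have hrw : Filter.Tendsto (fun n ↦ (r n : ℂ) * w) Filter.atTop (nhds w) := by
        simpa using ((continuous_ofReal.tendsto 1).comp hrlim).mul_const w
      exact (continuous_re.tendsto _).comp (((hgc.tendsto.comp hrw).const_mul 2).sub_const 1)
    have h3 : ∫ ζ, (2 * ((1 - w * (ζ : ℂ))⁻¹).re - 1) ∂κ = 2 * (momentGenerating μ w).re - 1 := by
      have hint := integrable_inv_one_sub_mul hμ hw
      have hmap : ∫ ζ : ℂ, (2 * ((1 - w * ζ)⁻¹).re - 1) ∂μ =
          ∫ ζ : Metric.sphere (0 : ℂ) 1, (2 * ((1 - w * (ζ : ℂ))⁻¹).re - 1) ∂κ :=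
        integral_map measurable_subtype_coe.aemeasurable
          (Measurable.aestronglyMeasurable (by fun_prop))
      have hre' : (momentGenerating μ w).re = ∫ ζ : ℂ, ((1 - w * ζ)⁻¹).re ∂μ :=
        (integral_re hint).symm
      have hint' : Integrable (fun ζ : ℂ ↦ ((1 - w * ζ)⁻¹).re) μ := hint.re
      rw [← hmap, integral_sub (hint'.const_mul 2) (integrable_const _), hre',
        MeasureTheory.integral_const_mul]
      simp
    have h4 := tendsto_nhds_unique h1 h2
    rw [h3] at h4
    simp at h4
    exact h4
  refine ⟨μ, hμprob, hμ, ?_⟩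
  obtain ⟨c, hc⟩ := ((analyticOnNhd_momentGenerating hμ).sub
    (hg.analyticOnNhd Metric.isOpen_ball)).eq_const_of_re_eq_const (c₀ := 0)
    (fun z hz ↦ by simp [hre_eq (by simpa using hz : ‖z‖ < 1)]) Metric.isOpen_ball
    (Metric.isConnected_ball one_pos)
  have hc0 : c = 0 := by
    rw [← hc 0 (by simp)]
    simp [momentGenerating, h0]
  intro z hz
  simpa [hc0, sub_eq_zero] using hc z hz

/-- The multiplicative monotonic convolution of two probability measures on the
unit circle is a probability measure on the unit circle: the function
`η(z) = η_{μ₁}(α⁻¹ η_{μ₂}(αz))` (with `α = ∫ ζ dμ₁`, interpreted as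
`η_{μ₁}(η_{μ₂}'(0) z)` when `α = 0`) is analytic on `𝔻`, satisfies
`|η(z)| ≤ |z|`, and equals `η_μ` for a unique probability measure `μ` on `𝕋`. -/
theorem stmt7 (μ₁ μ₂ : Measure ℂ) [IsProbabilityMeasure μ₁] [IsProbabilityMeasure μ₂]
    (hsupp₁ : μ₁ {ζ : ℂ | ‖ζ‖ = 1}ᶜ = 0) (hsupp₂ : μ₂ {ζ : ℂ | ‖ζ‖ = 1}ᶜ = 0)
    (α : ℂ) (hα : α = ∫ ζ : ℂ, ζ ∂μ₁)
    (η₁ η₂ η : ℂ → ℂ)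
    (hη₁ : ∀ z, η₁ z = (∫ ζ : ℂ, (z * ζ) / (1 - z * ζ) ∂μ₁) /
      (1 + ∫ ζ : ℂ, (z * ζ) / (1 - z * ζ) ∂μ₁))
    (hη₂ : ∀ z, η₂ z = (∫ ζ : ℂ, (z * ζ) / (1 - z * ζ) ∂μ₂) /
      (1 + ∫ ζ : ℂ, (z * ζ) / (1 - z * ζ) ∂μ₂))
    (hη : ∀ z, η z = if α ≠ 0 then η₁ (α⁻¹ * η₂ (α * z)) else η₁ (deriv η₂ 0 * z)) :
    AnalyticOnNhd ℂ η (Metric.ball (0 : ℂ) 1) ∧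
      (∀ z ∈ Metric.ball (0 : ℂ) 1, ‖η z‖ ≤ ‖z‖) ∧
      (∃! μ : Measure ℂ, IsProbabilityMeasure μ ∧ μ {ζ : ℂ | ‖ζ‖ = 1}ᶜ = 0 ∧
        ∀ z ∈ Metric.ball (0 : ℂ) 1,
          η z = (∫ ζ : ℂ, (z * ζ) / (1 - z * ζ) ∂μ) /
            (1 + ∫ ζ : ℂ, (z * ζ) / (1 - z * ζ) ∂μ)) := by
  have hμ₁ := ae_norm_eq_one hsupp₁
  have hμ₂ := ae_norm_eq_one hsupp₂
  obtain ⟨han₁, hle₁, -⟩ := eta_analytic_and_bound hμ₁ hη₁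
  obtain ⟨han₂, hle₂, hderiv₂⟩ := eta_analytic_and_bound hμ₂ hη₂
  have hα1 : ‖α‖ ≤ 1 := by
    have : ∀ᵐ ζ ∂μ₁, ‖ζ‖ ≤ (1 : ℝ) := hμ₁.mono fun ζ hζ ↦ hζ.le
    simpa [hα] using norm_integral_le_of_norm_le_const this
  have hαz {z : ℂ} (hz : ‖z‖ < 1) : ‖α * z‖ < 1 := by
    rw [norm_mul]
    nlinarith [norm_nonneg z, norm_nonneg α]
  obtain ⟨h, hh, hhle, hηh⟩ : ∃ h : ℂ → ℂ, DifferentiableOn ℂ h (Metric.ball 0 1) ∧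
      (∀ z, ‖z‖ < 1 → ‖h z‖ ≤ ‖z‖) ∧ η = η₁ ∘ h := by
    by_cases hα0 : α = 0
    · refine ⟨fun z ↦ deriv η₂ 0 * z, by fun_prop, fun z _ ↦ ?_, ?_⟩
      · rw [norm_mul]
        exact mul_le_of_le_one_left (norm_nonneg z) hderiv₂
      · ext z
        simp [hη, hα0]
    · refine ⟨fun z ↦ α⁻¹ * η₂ (α * z), ?_, fun z hz ↦ ?_, ?_⟩
      · exact (han₂.differentiableOn.comp (f := fun z ↦ α * z) (by fun_prop)
          fun z hz ↦ by simpa using hαz (by simpa using hz)).const_mul α⁻¹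
      · calc ‖α⁻¹ * η₂ (α * z)‖ = ‖α‖⁻¹ * ‖η₂ (α * z)‖ := by rw [norm_mul, norm_inv]
          _ ≤ ‖α‖⁻¹ * ‖α * z‖ := by gcongr; exact hle₂ _ (hαz hz)
          _ = ‖z‖ := by
            rw [norm_mul, inv_mul_cancel_left₀ (norm_ne_zero_iff.mpr hα0)]
      · ext z
        simp [hη, hα0]
  have hdiff : DifferentiableOn ℂ η (Metric.ball 0 1) := by
    rw [hηh]
    refine han₁.differentiableOn.comp hh fun z hz ↦ ?_
    rw [mem_ball_zero_iff] at hz ⊢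
    exact (hhle z hz).trans_lt hz
  have hle (z : ℂ) (hz : ‖z‖ < 1) : ‖η z‖ ≤ ‖z‖ := by
    rw [hηh]
    exact (hle₁ _ ((hhle z hz).trans_lt hz)).trans (hhle z hz)
  have hη0 : η 0 = 0 := by simpa using hle 0 (by simp)
  refine ⟨hdiff.analyticOnNhd Metric.isOpen_ball, fun z hz ↦ hle z (by simpa using hz), ?_⟩
  have hlt {z : ℂ} (hz : ‖z‖ < 1) : ‖η z‖ < 1 := (hle z hz).trans_lt hz
  obtain ⟨μ, hμprob, hμ, hμeq⟩ := exists_eqOn_momentGenerating (g := fun z ↦ (1 - η z)⁻¹)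
    ((hdiff.const_sub 1).inv fun z hz ↦ by
      simpa using one_sub_mul_ne_zero_of_norm (hlt (mem_ball_zero_iff.mp hz)) norm_one)
    (fun z hz ↦ half_le_re_inv (hlt hz)) (by simp [hη0])
  refine ⟨μ, ⟨hμprob, hμ, fun z hz ↦ ?_⟩, fun ν ⟨hνprob, hνsupp, hνeq⟩ ↦ ?_⟩
  · rw [eta_eq_one_sub_inv hμ (by simpa using hz), hμeq hz]
    simp
  · have hν := ae_norm_eq_one hνsupp
    refine eq_of_eqOn_momentGenerating hν hμ fun z hz ↦ ?_
    rw [hμeq hz]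
    simp only
    rw [hνeq z hz, eta_eq_one_sub_inv hν (by simpa using hz)]
    simp
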